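/- arXiv:2306.06616 — 3 statements merged into one kernel-verified Lean document; each statement's English description precedes it below -/
import Mathlib

section
/- Let C be a triangulated category and ((S, T), (U, V)) a twin cotorsion pair on C. Define B₁⁺ as the class of objects X admitting a distinguished triangle T → M → X → T[1] with T ∈ T and M ∈ S ∩ T, and B₂⁻ as the class of objects Y admitting a distinguished triangle Y → N' → U → Y[1] with N' ∈ U ∩ V and U ∈ U. Then B⁺ ⊆ B₁⁺ and B⁻ ⊆ B₂⁻. -/
open CategoryTheory CategoryTheory.Limits CategoryTheory.Pretriangulated

universe v u

variable (C : Type u) [Category.{v} C] [Preadditive C] [HasZeroObject C] [HasShift C ℤ]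
  [∀ n : ℤ, (shiftFunctor C n).Additive] [Pretriangulated C]

/-- A class of objects is closed under isomorphisms. -/
def ClosedUnderIso (D : Set C) : Prop := ∀ ⦃X Y : C⦄, (X ≅ Y) → X ∈ D → Y ∈ D

/-- A class of objects is closed under direct summands (retracts). -/
def ClosedUnderSummands (D : Set C) : Prop :=
  ∀ ⦃X Y : C⦄, Y ∈ D → (∃ (i : X ⟶ Y) (p : Y ⟶ X), i ≫ p = 𝟙 X) → X ∈ D

/-- A cotorsion pair `(U, V)` on a triangulated category: both classes are closed under
isomorphisms and direct summands, `Hom(U, V[1]) = 0`, and every object `B` admits a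
distinguished triangle `V₀ → U₀ → B → V₀[1]` with `U₀ ∈ U`, `V₀ ∈ V`. -/
def CotorsionPair (U V : Set C) : Prop :=
  ClosedUnderIso C U ∧ ClosedUnderSummands C U ∧
  ClosedUnderIso C V ∧ ClosedUnderSummands C V ∧
  (∀ ⦃X Y : C⦄, X ∈ U → Y ∈ V → ∀ f : X ⟶ Y⟦(1 : ℤ)⟧, f = 0) ∧
  (∀ B : C, ∃ (V₀ U₀ : C), V₀ ∈ V ∧ U₀ ∈ U ∧
    ∃ (x : V₀ ⟶ U₀) (y : U₀ ⟶ B) (δ : B ⟶ V₀⟦(1 : ℤ)⟧),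
      Triangle.mk x y δ ∈ distTriang C)

/-- A twin cotorsion pair `((S, T), (U, V))`: two cotorsion pairs with `S ⊆ U`. -/
def TwinCotorsionPair (S T U V : Set C) : Prop :=
  CotorsionPair C S T ∧ CotorsionPair C U V ∧ S ⊆ U

/-- `x : A ⟶ B` is `W`-monic: every morphism from `A` to an object of `W` factors
through `x`. -/
def WMonic (W : Set C) {A B : C} (x : A ⟶ B) : Prop :=
  ∀ ⦃W₀ : C⦄, W₀ ∈ W → ∀ g : A ⟶ W₀, ∃ h : B ⟶ W₀, x ≫ h = g

/-- `y : B ⟶ X` is `W`-epic: every morphism from an object of `W` to `X` factors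
through `y`. -/
def WEpic (W : Set C) {B X : C} (y : B ⟶ X) : Prop :=
  ∀ ⦃W₀ : C⦄, W₀ ∈ W → ∀ g : W₀ ⟶ X, ∃ h : W₀ ⟶ B, h ≫ y = g

/-- `B⁺`-type class: objects `X` admitting a distinguished triangle `V₀ → W₀ → X → V₀[1]`
with `V₀ ∈ V` and `W₀ ∈ W`. -/
def Bplus (V W : Set C) : Set C :=
  {X | ∃ (V₀ W₀ : C), V₀ ∈ V ∧ W₀ ∈ W ∧
    ∃ (f : V₀ ⟶ W₀) (g : W₀ ⟶ X) (δ : X ⟶ V₀⟦(1 : ℤ)⟧),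
      Triangle.mk f g δ ∈ distTriang C}

/-- `B⁻`-type class: objects `Y` admitting a distinguished triangle `Y → W₀ → S₀ → Y[1]`
with `W₀ ∈ W` and `S₀ ∈ S`. -/
def Bminus (S W : Set C) : Set C :=
  {Y | ∃ (W₀ S₀ : C), W₀ ∈ W ∧ S₀ ∈ S ∧
    ∃ (f : Y ⟶ W₀) (g : W₀ ⟶ S₀) (δ : S₀ ⟶ Y⟦(1 : ℤ)⟧),
      Triangle.mk f g δ ∈ distTriang C}

/-- The heart `H = B⁺ ∩ B⁻` of a twin cotorsion pair. -/
def Heart (S V W : Set C) : Set C := Bplus C V W ∩ Bminus C S W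

/-- A morphism factors through an object of the class `W`. -/
def FactorsThruClass (W : Set C) {X Y : C} (f : X ⟶ Y) : Prop :=
  ∃ (W₀ : C), W₀ ∈ W ∧ ∃ (g : X ⟶ W₀) (h : W₀ ⟶ Y), g ≫ h = f

/-- `x : A ⟶ B` is left almost split: any morphism out of `A` which is not a section
factors through `x`. -/
def LeftAlmostSplit {A B : C} (x : A ⟶ B) : Prop :=
  ∀ ⦃M : C⦄ (a : A ⟶ M), (¬ ∃ r : M ⟶ A, a ≫ r = 𝟙 A) → ∃ m : B ⟶ M, x ≫ m = a

/-- `y : B ⟶ X` is right almost split: any morphism into `X` which is not a retraction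
factors through `y`. -/
def RightAlmostSplit {B X : C} (y : B ⟶ X) : Prop :=
  ∀ ⦃N : C⦄ (c : N ⟶ X), (¬ ∃ s : X ⟶ N, s ≫ c = 𝟙 X) → ∃ n : N ⟶ B, n ≫ y = c

/-- An almost split triangle: a nonsplit distinguished triangle whose first morphism is
left almost split and whose second morphism is right almost split. -/
def IsAlmostSplitTriangle {A B X : C} (x : A ⟶ B) (y : B ⟶ X)
    (δ : X ⟶ A⟦(1 : ℤ)⟧) : Prop :=
  (Triangle.mk x y δ ∈ distTriang C) ∧ δ ≠ 0 ∧
    LeftAlmostSplit C x ∧ RightAlmostSplit C y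

/-!
In a cotorsion pair `(S, T)`, each class is the full `Hom(-, -⟦1⟧)`-orthogonal of the other. Let
`X` be the cone of a morphism between objects of `T` and resolve it as `T₀ ⟶ S₀ ⟶ X ⟶ T₀⟦1⟧`.
Since `S₀` has no nonzero morphism to a shifted object of `T`, the map `S₀ ⟶ X` factors through
`T`, so every morphism from an object of `S` to `S₀⟦1⟧` dies in `X⟦1⟧`. It therefore comes from
`T₀⟦1⟧`, hence vanishes, and `S₀ ∈ S ∩ T`. As `S ⊆ U` forces `V ⊆ T`, this applies to every
object of `B⁺`; the statement on `B⁻` is dual, with `(U, V)` in place of `(S, T)`.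
-/

section

variable {C}

theorem yoneda_exact₁ {T : Triangle C} (hT : T ∈ distTriang C) {X : C} (f : T.obj₁ ⟶ X)
    (hf : T.mor₃ ≫ f⟦(1 : ℤ)⟧' = 0) : ∃ g : T.obj₂ ⟶ X, f = T.mor₁ ≫ g := by
  obtain ⟨g', hg'⟩ : ∃ g' : T.obj₂⟦(1 : ℤ)⟧ ⟶ X⟦(1 : ℤ)⟧,
      f⟦(1 : ℤ)⟧' = (-T.mor₁⟦(1 : ℤ)⟧') ≫ g' :=
    Triangle.yoneda_exact₃ _ (rot_of_distTriang _ hT) (f⟦(1 : ℤ)⟧') hf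
  obtain ⟨g, rfl⟩ := (shiftFunctor C (1 : ℤ)).map_surjective g'
  refine ⟨-g, (shiftFunctor C (1 : ℤ)).map_injective ?_⟩
  simpa only [Functor.map_comp, Functor.map_neg, Preadditive.neg_comp,
    Preadditive.comp_neg] using hg'

theorem bplus_mono {V V' W W' : Set C} (hV : V ⊆ V') (hW : W ⊆ W') :
    Bplus C V W ⊆ Bplus C V' W' :=
  fun _ ⟨V₀, W₀, hV₀, hW₀, hX⟩ ↦ ⟨V₀, W₀, hV hV₀, hW hW₀, hX⟩

theorem bminus_mono {S S' W W' : Set C} (hS : S ⊆ S') (hW : W ⊆ W') :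
    Bminus C S W ⊆ Bminus C S' W' :=
  fun _ ⟨W₀, S₀, hW₀, hS₀, hY⟩ ↦ ⟨W₀, S₀, hW hW₀, hS hS₀, hY⟩

namespace CotorsionPair

variable {U V : Set C}

theorem hom_eq_zero (h : CotorsionPair C U V) {A B : C} (hA : A ∈ U) (hB : B ∈ V)
    (f : A ⟶ B⟦(1 : ℤ)⟧) : f = 0 :=
  h.2.2.2.2.1 hA hB f

theorem mem_bplus (h : CotorsionPair C U V) (X : C) : X ∈ Bplus C V U :=
  h.2.2.2.2.2 X

theorem mem_bminus (h : CotorsionPair C U V) (Y : C) : Y ∈ Bminus C U V := by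
  obtain ⟨V₀, U₀, hV₀, hU₀, x, y, δ, hδ⟩ := h.mem_bplus (Y⟦(1 : ℤ)⟧)
  obtain ⟨i, hi⟩ := (shiftFunctor C (1 : ℤ)).map_surjective (-δ)
  have hixy : Triangle.mk i x y ∈ distTriang C := by
    rw [rotate_distinguished_triangle]
    change Triangle.mk x y (-i⟦(1 : ℤ)⟧') ∈ distTriang C
    rwa [hi, neg_neg]
  exact ⟨V₀, U₀, hV₀, hU₀, i, x, y, hixy⟩

theorem mem_left_of_forall_hom_eq_zero (h : CotorsionPair C U V) {A : C}
    (hA : ∀ B ∈ V, ∀ f : A ⟶ B⟦(1 : ℤ)⟧, f = 0) : A ∈ U := by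
  obtain ⟨V₀, U₀, hV₀, hU₀, x, y, δ, hδ⟩ := h.mem_bplus A
  obtain ⟨s, hs⟩ := Triangle.coyoneda_exact₃ _ hδ (𝟙 A) (hA V₀ hV₀ _)
  exact h.2.1 hU₀ ⟨s, y, hs.symm⟩

theorem mem_right_of_forall_hom_eq_zero (h : CotorsionPair C U V) {B : C}
    (hB : ∀ A ∈ U, ∀ f : A ⟶ B⟦(1 : ℤ)⟧, f = 0) : B ∈ V := by
  obtain ⟨V₀, U₀, hV₀, hU₀, i, y, δ, hδ⟩ := h.mem_bminus B
  obtain ⟨r, hr⟩ := yoneda_exact₁ hδ (𝟙 B) (hB U₀ hU₀ _)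
  exact h.2.2.2.1 hV₀ ⟨i, r, hr.symm⟩

theorem right_subset_right {S T : Set C} (hST : CotorsionPair C S T)
    (hUV : CotorsionPair C U V) (hSU : S ⊆ U) : V ⊆ T :=
  fun _ hB ↦ hST.mem_right_of_forall_hom_eq_zero fun _ hA ↦ hUV.hom_eq_zero (hSU hA) hB

theorem factorsThruClass_of_mem_bplus (h : CotorsionPair C U V) {W : Set C} {A X : C}
    (hA : A ∈ U) (hX : X ∈ Bplus C V W) (p : A ⟶ X) : FactorsThruClass C W p := by
  obtain ⟨V₀, W₀, hV₀, hW₀, f, g, δ, hδ⟩ := hX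
  obtain ⟨k, hk⟩ := Triangle.coyoneda_exact₃ _ hδ p (h.hom_eq_zero hA hV₀ _)
  exact ⟨W₀, hW₀, k, g, hk.symm⟩

theorem factorsThruClass_of_mem_bminus (h : CotorsionPair C U V) {W : Set C} {Y B : C}
    (hB : B ∈ V) (hY : Y ∈ Bminus C U W) (i : Y ⟶ B) : FactorsThruClass C W i := by
  obtain ⟨W₀, U₀, hW₀, hU₀, f, g, δ, hδ⟩ := hY
  obtain ⟨k, hk⟩ := yoneda_exact₁ hδ i (h.hom_eq_zero hU₀ hB _)
  exact ⟨W₀, hW₀, f, k, hk.symm⟩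

theorem mem_right_of_distTriang (h : CotorsionPair C U V) {V₀ A X : C} {f : V₀ ⟶ A}
    {p : A ⟶ X} {δ : X ⟶ V₀⟦(1 : ℤ)⟧} (hδ : Triangle.mk f p δ ∈ distTriang C)
    (hV₀ : V₀ ∈ V) (hp : FactorsThruClass C V p) : A ∈ V := by
  obtain ⟨V₁, hV₁, k, g, rfl⟩ := hp
  refine h.mem_right_of_forall_hom_eq_zero fun U₀ hU₀ φ ↦ ?_
  have hφ : φ ≫ (k ≫ g)⟦(1 : ℤ)⟧' = 0 := by
    rw [Functor.map_comp, ← Category.assoc, h.hom_eq_zero hU₀ hV₁ (φ ≫ k⟦(1 : ℤ)⟧'), zero_comp]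
  obtain ⟨l, hl⟩ := Triangle.coyoneda_exact₁ _ (rot_of_distTriang _ hδ) φ hφ
  rw [hl, h.hom_eq_zero hU₀ hV₀ l]
  exact zero_comp

theorem mem_left_of_distTriang (h : CotorsionPair C U V) {Y B U₀ : C} {i : Y ⟶ B}
    {g : B ⟶ U₀} {δ : U₀ ⟶ Y⟦(1 : ℤ)⟧} (hδ : Triangle.mk i g δ ∈ distTriang C)
    (hU₀ : U₀ ∈ U) (hi : FactorsThruClass C U i) : B ∈ U := by
  obtain ⟨U₁, hU₁, f, k, rfl⟩ := hi
  refine h.mem_left_of_forall_hom_eq_zero fun V₀ hV₀ φ ↦ ?_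
  have hφ : (f ≫ k) ≫ φ = 0 := by
    rw [Category.assoc, h.hom_eq_zero hU₁ hV₀ (k ≫ φ), comp_zero]
  obtain ⟨l, hl⟩ := Triangle.yoneda_exact₂ _ hδ φ hφ
  rw [hl, h.hom_eq_zero hU₀ hV₀ l]
  exact comp_zero

theorem bplus_right_subset (h : CotorsionPair C U V) : Bplus C V V ⊆ Bplus C V (U ∩ V) := by
  intro X hX
  obtain ⟨V₀, U₀, hV₀, hU₀, f, p, δ, hδ⟩ := h.mem_bplus X
  have hp : FactorsThruClass C V p := h.factorsThruClass_of_mem_bplus hU₀ hX p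
  exact ⟨V₀, U₀, hV₀, ⟨hU₀, h.mem_right_of_distTriang hδ hV₀ hp⟩, f, p, δ, hδ⟩

theorem bminus_left_subset (h : CotorsionPair C U V) : Bminus C U U ⊆ Bminus C U (U ∩ V) := by
  intro Y hY
  obtain ⟨V₀, U₀, hV₀, hU₀, i, g, δ, hδ⟩ := h.mem_bminus Y
  have hi : FactorsThruClass C U i := h.factorsThruClass_of_mem_bminus hV₀ hY i
  exact ⟨V₀, U₀, ⟨h.mem_left_of_distTriang hδ hU₀ hi, hV₀⟩, hU₀, i, g, δ, hδ⟩

end CotorsionPair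

end

/-- **Lemma 4.1.** Let `((S, T), (U, V))` be a twin cotorsion pair. With
`B₁⁺` the class of objects `X` admitting a distinguished triangle `T₀ → M → X → T₀[1]`
(`T₀ ∈ T`, `M ∈ S ∩ T`) and `B₂⁻` the class of objects `Y` admitting a distinguished
triangle `Y → N' → U₀ → Y[1]` (`N' ∈ U ∩ V`, `U₀ ∈ U`), we have `B⁺ ⊆ B₁⁺` and
`B⁻ ⊆ B₂⁻`. -/
theorem heart_stmt_9 {S T U V : Set C} (h : TwinCotorsionPair C S T U V) :
    Bplus C V (T ∩ U) ⊆ Bplus C T (S ∩ T) ∧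
    Bminus C S (T ∩ U) ⊆ Bminus C U (U ∩ V) := by
  obtain ⟨hST, hUV, hSU⟩ := h
  have hVT : V ⊆ T := hST.right_subset_right hUV hSU
  exact ⟨(bplus_mono hVT Set.inter_subset_left).trans hST.bplus_right_subset,
    (bminus_mono hSU Set.inter_subset_right).trans hUV.bminus_left_subset⟩
end

section
/- Let C be a triangulated category, ((S, T), (U, V)) a twin cotorsion pair on C, and W = T ∩ U. Let A →x B →y C →δ A[1] be an almost split triangle (δ ≠ 0, x left almost split, y right almost split) such that A and C are nonzero objects of H = B⁺ ∩ B⁻ having no nonzero direct summand in W. Then x is W-monic, y is W-epic, and B ∈ H. -/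
open CategoryTheory CategoryTheory.Limits CategoryTheory.Pretriangulated

universe v u

variable (C : Type u) [Category.{v} C] [Preadditive C] [HasZeroObject C] [HasShift C ℤ]
  [∀ n : ℤ, (shiftFunctor C n).Additive] [Pretriangulated C]

/-!
Write `W = T ∩ U`. An object lies in `B⁺` exactly when every morphism to it from an object of `U`
factors through `W`, and in `B⁻` exactly when every morphism from it to an object of `T` does.
If `A → B → X → A[1]` is distinguished with `y : B ⟶ X` `W`-epic and `A, X ∈ B⁺`, then for
`u : U₀ ⟶ B` with `U₀ ∈ U` the composite `u ≫ y` factors through `W`; lifting this factorization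
along `y` changes `u` by a morphism through `A`, which factors through `W` as well, so `B ∈ B⁺`.
Dually for `B⁻` and `W`-monic `x`. For an almost split triangle, `W`-monicity and `W`-epicity hold
because a section `A → W₀` or a retraction `W₀ → X` would make `A` or `X` a summand of `W₀`, hence
an object of `W`.
-/

section Category

variable {D : Type*} [Category* D] {W : Set D}

theorem ClosedUnderSummands.inter {P Q : Set D} (hP : ClosedUnderSummands D P)
    (hQ : ClosedUnderSummands D Q) : ClosedUnderSummands D (P ∩ Q) :=
  fun _ _ hY hr => ⟨hP hY.1 hr, hQ hY.2 hr⟩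

theorem LeftAlmostSplit.wMonic {A B : D} {x : A ⟶ B} (hx : LeftAlmostSplit D x)
    (hW : ClosedUnderSummands D W) (hA : A ∉ W) : WMonic D W x :=
  fun _ hW₀ g => hx g fun ⟨r, hr⟩ => hA (hW hW₀ ⟨g, r, hr⟩)

theorem RightAlmostSplit.wEpic {B X : D} {y : B ⟶ X} (hy : RightAlmostSplit D y)
    (hW : ClosedUnderSummands D W) (hX : X ∉ W) : WEpic D W y :=
  fun _ hW₀ g => hy g fun ⟨s, hs⟩ => hX (hW hW₀ ⟨s, g, hs⟩)

theorem FactorsThruClass.comp_left {X Y Z : D} {f : Y ⟶ Z} (hf : FactorsThruClass D W f)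
    (e : X ⟶ Y) : FactorsThruClass D W (e ≫ f) := by
  obtain ⟨W₀, hW₀, g, h, rfl⟩ := hf
  exact ⟨W₀, hW₀, e ≫ g, h, Category.assoc _ _ _⟩

theorem FactorsThruClass.comp_right {X Y Z : D} {f : X ⟶ Y} (hf : FactorsThruClass D W f)
    (e : Y ⟶ Z) : FactorsThruClass D W (f ≫ e) := by
  obtain ⟨W₀, hW₀, g, h, rfl⟩ := hf
  exact ⟨W₀, hW₀, g, h ≫ e, (Category.assoc _ _ _).symm⟩

theorem FactorsThruClass.add [Preadditive D] [HasBinaryBiproducts D]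
    (hW : ∀ ⦃W₁ W₂ : D⦄, W₁ ∈ W → W₂ ∈ W → (W₁ ⊞ W₂) ∈ W) {X Y : D} {f₁ f₂ : X ⟶ Y}
    (hf₁ : FactorsThruClass D W f₁) (hf₂ : FactorsThruClass D W f₂) :
    FactorsThruClass D W (f₁ + f₂) := by
  obtain ⟨W₁, hW₁, g₁, h₁, rfl⟩ := hf₁
  obtain ⟨W₂, hW₂, g₂, h₂, rfl⟩ := hf₂
  exact ⟨W₁ ⊞ W₂, hW hW₁ hW₂, biprod.lift g₁ g₂, biprod.desc h₁ h₂, biprod.lift_desc⟩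

end Category

section Pretriangulated

variable {C}

theorem exists_eq_mor₁_comp_of_distTriang {T : Triangle C} (hT : T ∈ distTriang C) {M : C}
    (f : T.obj₁ ⟶ M) (hf : T.mor₃ ≫ f⟦(1 : ℤ)⟧' = 0) : ∃ g : T.obj₂ ⟶ M, f = T.mor₁ ≫ g := by
  obtain ⟨g', hg'⟩ := Triangle.yoneda_exact₃ _ (rot_of_distTriang _ hT) _ hf
  obtain ⟨g, rfl⟩ : ∃ g : T.obj₂ ⟶ M, g⟦(1 : ℤ)⟧' = g' :=
    (shiftFunctor C (1 : ℤ)).map_surjective g'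
  refine ⟨-g, (shiftFunctor C (1 : ℤ)).map_injective ?_⟩
  calc
    f⟦(1 : ℤ)⟧' = (-T.mor₁⟦(1 : ℤ)⟧') ≫ g⟦(1 : ℤ)⟧' := hg'
    _ = (T.mor₁ ≫ (-g))⟦(1 : ℤ)⟧' := by simp

namespace FactorsThruClass

variable {W : Set C} {A B X M : C} {x : A ⟶ B} {y : B ⟶ X} {δ : X ⟶ A⟦(1 : ℤ)⟧}

theorem of_comp_wEpic (hW : ∀ ⦃W₁ W₂ : C⦄, W₁ ∈ W → W₂ ∈ W → (W₁ ⊞ W₂) ∈ W)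
    (hd : Triangle.mk x y δ ∈ distTriang C) (hy : WEpic C W y)
    (hA : ∀ m : M ⟶ A, FactorsThruClass C W m) {u : M ⟶ B}
    (hu : FactorsThruClass C W (u ≫ y)) : FactorsThruClass C W u := by
  obtain ⟨W₀, hW₀, g, h, hgh⟩ := hu
  obtain ⟨l, rfl⟩ := hy hW₀ h
  have huy : (u - g ≫ l) ≫ y = 0 := by
    rw [Preadditive.sub_comp, Category.assoc, hgh, sub_self]
  obtain ⟨m, hm⟩ := Triangle.coyoneda_exact₂ _ hd _ huy
  rw [sub_eq_iff_eq_add.mp hm]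
  exact ((hA m).comp_right x).add hW ⟨W₀, hW₀, g, l, rfl⟩

theorem of_wMonic_comp (hW : ∀ ⦃W₁ W₂ : C⦄, W₁ ∈ W → W₂ ∈ W → (W₁ ⊞ W₂) ∈ W)
    (hd : Triangle.mk x y δ ∈ distTriang C) (hx : WMonic C W x)
    (hX : ∀ m : X ⟶ M, FactorsThruClass C W m) {t : B ⟶ M}
    (ht : FactorsThruClass C W (x ≫ t)) : FactorsThruClass C W t := by
  obtain ⟨W₀, hW₀, g, h, hgh⟩ := ht
  obtain ⟨l, rfl⟩ := hx hW₀ g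
  have hxt : x ≫ (t - l ≫ h) = 0 := by
    rw [Preadditive.comp_sub, ← Category.assoc, hgh, sub_self]
  obtain ⟨m, hm⟩ := Triangle.yoneda_exact₂ _ hd _ hxt
  rw [sub_eq_iff_eq_add.mp hm]
  exact ((hX m).comp_left y).add hW ⟨W₀, hW₀, l, h, rfl⟩

end FactorsThruClass

namespace CotorsionPair

variable {U V : Set C}

theorem closedUnderSummands_left (h : CotorsionPair C U V) : ClosedUnderSummands C U := h.2.1

theorem closedUnderSummands_right (h : CotorsionPair C U V) : ClosedUnderSummands C V :=
  h.2.2.2.1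

theorem hom_eq_zero_s12 (h : CotorsionPair C U V) {X Y : C} (hX : X ∈ U) (hY : Y ∈ V)
    (f : X ⟶ Y⟦(1 : ℤ)⟧) : f = 0 :=
  h.2.2.2.2.1 hX hY f

theorem exists_distTriang_to (h : CotorsionPair C U V) (B : C) :
    ∃ V₀ ∈ V, ∃ U₀ ∈ U, ∃ (f : V₀ ⟶ U₀) (g : U₀ ⟶ B) (δ : B ⟶ V₀⟦(1 : ℤ)⟧),
      Triangle.mk f g δ ∈ distTriang C := by
  obtain ⟨V₀, U₀, hV₀, hU₀, hd⟩ := h.2.2.2.2.2 B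
  exact ⟨V₀, hV₀, U₀, hU₀, hd⟩

theorem exists_distTriang_from (h : CotorsionPair C U V) (B : C) :
    ∃ V₀ ∈ V, ∃ U₀ ∈ U, ∃ (f : B ⟶ V₀) (g : V₀ ⟶ U₀) (δ : U₀ ⟶ B⟦(1 : ℤ)⟧),
      Triangle.mk f g δ ∈ distTriang C := by
  obtain ⟨V₀, hV₀, U₀, hU₀, g, δ, f', hd⟩ := h.exists_distTriang_to (B⟦(1 : ℤ)⟧)
  obtain ⟨f, rfl⟩ := (shiftFunctor C (1 : ℤ)).map_surjective f'
  refine ⟨V₀, hV₀, U₀, hU₀, -f, g, δ, (rotate_distinguished_triangle _).mpr ?_⟩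
  have hneg : -(-f)⟦(1 : ℤ)⟧' = f⟦(1 : ℤ)⟧' := by rw [Functor.map_neg, neg_neg]
  rw [← hneg] at hd
  exact hd

theorem mem_left_of_hom_eq_zero (h : CotorsionPair C U V) {X : C}
    (hX : ∀ ⦃Y : C⦄, Y ∈ V → ∀ f : X ⟶ Y⟦(1 : ℤ)⟧, f = 0) : X ∈ U := by
  obtain ⟨V₀, hV₀, U₀, hU₀, f, g, δ, hd⟩ := h.exists_distTriang_to X
  obtain ⟨s, hs⟩ := Triangle.coyoneda_exact₃ _ hd (𝟙 X) (hX hV₀ _)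
  exact h.closedUnderSummands_left hU₀ ⟨s, g, hs.symm⟩

theorem mem_right_of_hom_eq_zero (h : CotorsionPair C U V) {Y : C}
    (hY : ∀ ⦃X : C⦄, X ∈ U → ∀ f : X ⟶ Y⟦(1 : ℤ)⟧, f = 0) : Y ∈ V := by
  obtain ⟨V₀, hV₀, U₀, hU₀, f, g, δ, hd⟩ := h.exists_distTriang_from Y
  obtain ⟨r, hr⟩ := exists_eq_mor₁_comp_of_distTriang hd (𝟙 Y) (hY hU₀ _)
  exact h.closedUnderSummands_right hV₀ ⟨f, r, hr.symm⟩

theorem biprod_mem_left (h : CotorsionPair C U V) {X₁ X₂ : C} (hX₁ : X₁ ∈ U) (hX₂ : X₂ ∈ U) :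
    (X₁ ⊞ X₂) ∈ U :=
  h.mem_left_of_hom_eq_zero fun _ hY f => biprod.hom_ext' f 0
    (by simp [h.hom_eq_zero_s12 hX₁ hY (biprod.inl ≫ f)])
    (by simp [h.hom_eq_zero_s12 hX₂ hY (biprod.inr ≫ f)])

theorem biprod_mem_right (h : CotorsionPair C U V) {Y₁ Y₂ : C} (hY₁ : Y₁ ∈ V) (hY₂ : Y₂ ∈ V) :
    (Y₁ ⊞ Y₂) ∈ V := by
  refine h.mem_right_of_hom_eq_zero fun X hX f => ?_
  calc
    f = f ≫ (biprod.fst ≫ biprod.inl + biprod.snd ≫ biprod.inr)⟦(1 : ℤ)⟧' := by simp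
    _ = (f ≫ biprod.fst⟦(1 : ℤ)⟧') ≫ biprod.inl⟦(1 : ℤ)⟧' +
        (f ≫ biprod.snd⟦(1 : ℤ)⟧') ≫ biprod.inr⟦(1 : ℤ)⟧' := by
      simp only [Functor.map_add, Functor.map_comp, Preadditive.comp_add, Category.assoc]
    _ = 0 := by
      rw [h.hom_eq_zero_s12 hX hY₁ (f ≫ _), h.hom_eq_zero_s12 hX hY₂ (f ≫ _), zero_comp, zero_comp,
        add_zero]

end CotorsionPair

namespace TwinCotorsionPair

variable {S T U V : Set C}

theorem closedUnderSummands_inter (h : TwinCotorsionPair C S T U V) :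
    ClosedUnderSummands C (T ∩ U) :=
  h.1.closedUnderSummands_right.inter h.2.1.closedUnderSummands_left

theorem biprod_mem_inter (h : TwinCotorsionPair C S T U V) ⦃W₁ W₂ : C⦄ (hW₁ : W₁ ∈ T ∩ U)
    (hW₂ : W₂ ∈ T ∩ U) : (W₁ ⊞ W₂) ∈ T ∩ U :=
  ⟨h.1.biprod_mem_right hW₁.1 hW₂.1, h.2.1.biprod_mem_left hW₁.2 hW₂.2⟩

theorem mem_bplus_iff (h : TwinCotorsionPair C S T U V) {X : C} :
    X ∈ Bplus C V (T ∩ U) ↔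
      ∀ ⦃U₀ : C⦄, U₀ ∈ U → ∀ u : U₀ ⟶ X, FactorsThruClass C (T ∩ U) u := by
  obtain ⟨hST, hUV, hSU⟩ := h
  constructor
  · rintro ⟨V₀, W₀, hV₀, hW₀, f, g, δ, hd⟩ U₀ hU₀ u
    obtain ⟨k, hk⟩ := Triangle.coyoneda_exact₃ _ hd u (hUV.hom_eq_zero_s12 hU₀ hV₀ _)
    exact ⟨W₀, hW₀, k, g, hk.symm⟩
  · intro hX
    obtain ⟨V₀, hV₀, U₀, hU₀, f, g, δ, hd⟩ := hUV.exists_distTriang_to X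
    obtain ⟨W₀, hW₀, k, l, hkl⟩ := hX hU₀ g
    have hU₀T : U₀ ∈ T := hST.mem_right_of_hom_eq_zero fun S₀ hS₀ s => by
      have hs : s ≫ g⟦(1 : ℤ)⟧' = 0 := by
        rw [← hkl, Functor.map_comp, ← Category.assoc, hST.hom_eq_zero_s12 hS₀ hW₀.1 (s ≫ _),
          zero_comp]
      obtain ⟨r, hr⟩ := Triangle.coyoneda_exact₁ _ (rot_of_distTriang _ hd) s hs
      rw [hr, hUV.hom_eq_zero_s12 (hSU hS₀) hV₀ r]
      exact zero_comp
    exact ⟨V₀, U₀, hV₀, ⟨hU₀T, hU₀⟩, f, g, δ, hd⟩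

theorem mem_bminus_iff (h : TwinCotorsionPair C S T U V) {Y : C} :
    Y ∈ Bminus C S (T ∩ U) ↔
      ∀ ⦃T₀ : C⦄, T₀ ∈ T → ∀ t : Y ⟶ T₀, FactorsThruClass C (T ∩ U) t := by
  obtain ⟨hST, hUV, hSU⟩ := h
  constructor
  · rintro ⟨W₀, S₀, hW₀, hS₀, f, g, δ, hd⟩ T₀ hT₀ t
    obtain ⟨k, hk⟩ := exists_eq_mor₁_comp_of_distTriang hd t (hST.hom_eq_zero_s12 hS₀ hT₀ _)
    exact ⟨W₀, hW₀, f, k, hk.symm⟩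
  · intro hY
    obtain ⟨T₀, hT₀, S₀, hS₀, f, g, δ, hd⟩ := hST.exists_distTriang_from Y
    obtain ⟨W₀, hW₀, k, l, hkl⟩ := hY hT₀ f
    have hT₀U : T₀ ∈ U := hUV.mem_left_of_hom_eq_zero fun V₀ hV₀ v => by
      have hv : f ≫ v = 0 := by
        rw [← hkl, Category.assoc, hUV.hom_eq_zero_s12 hW₀.2 hV₀ (l ≫ v), comp_zero]
      obtain ⟨r, hr⟩ := Triangle.yoneda_exact₂ _ hd v hv
      rw [hr, hUV.hom_eq_zero_s12 (hSU hS₀) hV₀ r]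
      exact comp_zero
    exact ⟨T₀, S₀, ⟨hT₀, hT₀U⟩, hS₀, f, g, δ, hd⟩

variable {A B X : C} {x : A ⟶ B} {y : B ⟶ X} {δ : X ⟶ A⟦(1 : ℤ)⟧}

theorem mem_bplus_of_wEpic (h : TwinCotorsionPair C S T U V)
    (hd : Triangle.mk x y δ ∈ distTriang C) (hy : WEpic C (T ∩ U) y)
    (hA : A ∈ Bplus C V (T ∩ U)) (hX : X ∈ Bplus C V (T ∩ U)) : B ∈ Bplus C V (T ∩ U) :=
  h.mem_bplus_iff.mpr fun _ hU₀ u =>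
    .of_comp_wEpic h.biprod_mem_inter hd hy (h.mem_bplus_iff.mp hA hU₀)
      (h.mem_bplus_iff.mp hX hU₀ (u ≫ y))

theorem mem_bminus_of_wMonic (h : TwinCotorsionPair C S T U V)
    (hd : Triangle.mk x y δ ∈ distTriang C) (hx : WMonic C (T ∩ U) x)
    (hA : A ∈ Bminus C S (T ∩ U)) (hX : X ∈ Bminus C S (T ∩ U)) : B ∈ Bminus C S (T ∩ U) :=
  h.mem_bminus_iff.mpr fun _ hT₀ t =>
    .of_wMonic_comp h.biprod_mem_inter hd hx (h.mem_bminus_iff.mp hX hT₀)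
      (h.mem_bminus_iff.mp hA hT₀ (x ≫ t))

end TwinCotorsionPair

end Pretriangulated

/-- **Proposition 5.7** (with Lemma 3.2). Let `((S, T), (U, V))` be a twin cotorsion
pair with `W = T ∩ U` and let `A →x B →y X →δ A[1]` be an almost split triangle whose
end terms `A` and `X` are nonzero objects of the heart `H = B⁺ ∩ B⁻` having no nonzero
direct summand in `W`. Then `x` is `W`-monic, `y` is `W`-epic, and `B ∈ H`. -/
theorem heart_stmt_12 {S T U V : Set C} (h : TwinCotorsionPair C S T U V)
    {A B X : C} (x : A ⟶ B) (y : B ⟶ X) (δ : X ⟶ A⟦(1 : ℤ)⟧)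
    (hAS : IsAlmostSplitTriangle C x y δ)
    (hA : A ∈ Heart C S V (T ∩ U)) (hX : X ∈ Heart C S V (T ∩ U))
    (hA0 : ¬ IsZero A) (hX0 : ¬ IsZero X)
    (hAW : ∀ D : C, D ∈ T ∩ U → (∃ (i : D ⟶ A) (p : A ⟶ D), i ≫ p = 𝟙 D) → IsZero D)
    (hXW : ∀ D : C, D ∈ T ∩ U → (∃ (i : D ⟶ X) (p : X ⟶ D), i ≫ p = 𝟙 D) → IsZero D) :
    WMonic C (T ∩ U) x ∧ WEpic C (T ∩ U) y ∧ B ∈ Heart C S V (T ∩ U) := by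
  obtain ⟨hd, -, hx, hy⟩ := hAS
  have hA_notMem : A ∉ T ∩ U := fun hA' => hA0 (hAW A hA' ⟨𝟙 A, 𝟙 A, Category.comp_id _⟩)
  have hX_notMem : X ∉ T ∩ U := fun hX' => hX0 (hXW X hX' ⟨𝟙 X, 𝟙 X, Category.comp_id _⟩)
  have hxW : WMonic C (T ∩ U) x := hx.wMonic h.closedUnderSummands_inter hA_notMem
  have hyW : WEpic C (T ∩ U) y := hy.wEpic h.closedUnderSummands_inter hX_notMem
  exact ⟨hxW, hyW, h.mem_bplus_of_wEpic hd hyW hA.1 hX.1, h.mem_bminus_of_wMonic hd hxW hA.2 hX.2⟩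
end

section
/- Let k be a field and C a Krull–Schmidt, Hom-finite, k-linear triangulated category (every Hom space is a finite-dimensional k-vector space, and every object is isomorphic to a finite direct sum of objects with local endomorphism rings). If C has a cluster tilting object T, then C has a Serre functor: there exist a k-linear autoequivalence S : C → C and k-linear isomorphisms Hom(A, B) ≅ Hom(B, S(A))* (where (−)* denotes k-linear dual), natural in both A and B. -/
open CategoryTheory CategoryTheory.Limits CategoryTheory.Pretriangulated

universe v u

variable (k : Type*) [Field k]
variable (C : Type u) [Category.{v} C] [Preadditive C] [HasZeroObject C] [HasShift C ℤ]
  [∀ n : ℤ, (shiftFunctor C n).Additive] [Pretriangulated C]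
  [HasFiniteBiproducts C] [Linear k C]

/-- `C` is Krull–Schmidt: every object is isomorphic to a finite direct sum of objects
with local endomorphism rings. -/
def KrullSchmidt : Prop :=
  ∀ X : C, ∃ (n : ℕ) (f : Fin n → C) (_ : X ≅ ⨁ f), ∀ i, IsLocalRing (End (f i))

/-- `add T`: the objects isomorphic to direct summands of finite direct sums of copies
of `T`, described as retracts of finite powers `T^n`. -/
def addSet (T : C) : Set C :=
  {X | ∃ (n : ℕ) (i : X ⟶ ⨁ (fun _ : Fin n => T)) (p : ⨁ (fun _ : Fin n => T) ⟶ X),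
    i ≫ p = 𝟙 X}

/-- `T` is a cluster tilting object: for every `X`, membership in `add T` is equivalent
to the vanishing of `Hom(T, X[1])` and to the vanishing of `Hom(X, T[1])`. -/
def ClusterTilting (T : C) : Prop :=
  ∀ X : C, (X ∈ addSet C T ↔ ∀ f : T ⟶ X⟦(1 : ℤ)⟧, f = 0) ∧
           (X ∈ addSet C T ↔ ∀ f : X ⟶ T⟦(1 : ℤ)⟧, f = 0)

/-- An object is indecomposable if it is nonzero and in any biproduct decomposition one
summand vanishes. -/
def Indecomposable (X : C) : Prop :=
  ¬ IsZero X ∧ ∀ (Y Z : C), (X ≅ Y ⊞ Z) → IsZero Y ∨ IsZero Z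

/-!
A Serre functor sends `A` to an object representing `X ↦ Hom(A, X)*`, and quasi-inversely `S` to
an object corepresenting `X ↦ Hom(X, S)*`. The second problem is the first one in the opposite
category, where `T` remains cluster tilting, so it suffices to represent homological presheaves `F`
of finite-dimensional vector spaces.

Put `G = T ⊞ T⟦1⟧`. Choose `Hom(-, B₀) ⟶ F` surjective at `G`, then kill the kernel at `G` by
`B₀ ⟶ B₁`, the cone of a finite family of generators of that kernel; `F` being homological,
`Hom(-, B₀) ⟶ F` extends to `B₁`. Doing this three times gives a tower `B₀ ⟶ B₁ ⟶ B₂ ⟶ B₃`. Every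
object is the cone of a morphism in `add T` (a right `add T`-approximation), and the four lemma
along this triangle shows that `Hom(-, B₁) ⟶ F` is surjective with kernel killed by `B₁ ⟶ B₃`.
So `F` is a direct summand of `Hom(-, B₃)`, and idempotents split in a Krull–Schmidt category:
a summand, in the Karoubi envelope, of a biproduct of objects with local endomorphism rings already
lives in the category, by exchanging the objects one at a time.
-/

section IdempotentCompleteness

open Idempotents

section Exchange

variable {𝒟 : Type*} [Category* 𝒟] [Preadditive 𝒟] [HasBinaryBiproducts 𝒟]

lemma exists_iso_biprod_of_retract [IsIdempotentComplete 𝒟] {X Y : 𝒟} (h : Retract X Y) :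
    ∃ (V : 𝒟) (e : X ⊞ V ≅ Y), biprod.inl ≫ e.hom = h.i := by
  obtain ⟨V, i, r, hir, hri⟩ := IsIdempotentComplete.idempotents_split Y (𝟙 Y - h.r ≫ h.i)
    (idem_of_id_sub_idem _ (by simp))
  have hr : h.i ≫ r = 0 := by
    calc h.i ≫ r = h.i ≫ (r ≫ i) ≫ r := by simp [hir]
      _ = 0 := by simp [hri]
  have hi : i ≫ h.r = 0 := by
    calc i ≫ h.r = i ≫ (r ≫ i) ≫ h.r := by simp [reassoc_of% hir]
      _ = 0 := by simp [hri]
  refine ⟨V, ⟨biprod.desc h.i i, biprod.lift h.r r, ?_, ?_⟩, biprod.inl_desc _ _⟩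
  · ext <;> simp [hir, hr, hi]
  · rw [biprod.lift_desc, hri, add_sub_cancel]

lemma exists_iso_biprod_of_isIso_inl_fst [IsIdempotentComplete 𝒟] {X W Y Z : 𝒟}
    (α : Y ⊞ Z ≅ X ⊞ W)
    (h : IsIso ((biprod.inl ≫ α.inv ≫ biprod.fst) ≫ biprod.inl ≫ α.hom ≫ biprod.fst)) :
    ∃ V : 𝒟, Nonempty (X ⊞ V ≅ Y) ∧ Nonempty (V ⊞ Z ≅ W) := by
  set a := biprod.inl ≫ α.inv ≫ biprod.fst
  set b := biprod.inl ≫ α.hom ≫ biprod.fst with hb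
  obtain ⟨V, e, he⟩ := exists_iso_biprod_of_retract
    (⟨a, b ≫ inv (a ≫ b), by rw [← Category.assoc, IsIso.hom_inv_id]⟩ : Retract X Y)
  let β : X ⊞ V ⊞ Z ≅ X ⊞ W :=
    (biprod.associator X V Z).symm ≪≫ biprod.mapIso e (Iso.refl Z) ≪≫ α
  have hβ : biprod.inl ≫ β.hom ≫ biprod.fst = a ≫ b := by
    have hassoc : biprod.inl ≫ (biprod.associator X V Z).inv = biprod.inl ≫ biprod.inl := by
      ext <;> simp
    simp [β, hb, reassoc_of% hassoc, reassoc_of% he, -biprod.associator_inv]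
  have : IsIso (biprod.inl ≫ β.hom ≫ biprod.fst) := hβ ▸ h
  exact ⟨V, ⟨e⟩, ⟨Biprod.isoElim β⟩⟩

lemma exists_iso_biprod_of_isLocalRing_end [IsIdempotentComplete 𝒟] {X W Y Z : 𝒟}
    [IsLocalRing (End X)] (α : Y ⊞ Z ≅ X ⊞ W) :
    ∃ V : 𝒟, (Nonempty (X ⊞ V ≅ Y) ∧ Nonempty (V ⊞ Z ≅ W)) ∨
      (Nonempty (X ⊞ V ≅ Z) ∧ Nonempty (V ⊞ Y ≅ W)) := by
  let α' : Z ⊞ Y ≅ X ⊞ W := biprod.braiding Z Y ≪≫ α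
  let viaY : End X := (biprod.inl ≫ α.inv ≫ biprod.fst) ≫ biprod.inl ≫ α.hom ≫ biprod.fst
  let viaZ : End X := (biprod.inl ≫ α'.inv ≫ biprod.fst) ≫ biprod.inl ≫ α'.hom ≫ biprod.fst
  have hinl : biprod.inl ≫ (biprod.braiding Z Y).hom = biprod.inr := by ext <;> simp
  have hsum : viaY + viaZ = 1 := by
    calc viaY + viaZ
        = biprod.inl ≫ α.inv ≫ (biprod.fst ≫ biprod.inl + biprod.snd ≫ biprod.inr) ≫
            α.hom ≫ biprod.fst := by
          simp [viaY, viaZ, α', reassoc_of% hinl, -biprod.braiding_hom, -biprod.total]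
      _ = 𝟙 X := by simp
  rcases IsLocalRing.isUnit_or_isUnit_of_add_one hsum with h | h
  · obtain ⟨V, hV⟩ := exists_iso_biprod_of_isIso_inl_fst α ((isUnit_iff_isIso _).1 h)
    exact ⟨V, Or.inl hV⟩
  · obtain ⟨V, hV⟩ := exists_iso_biprod_of_isIso_inl_fst α' ((isUnit_iff_isIso _).1 h)
    exact ⟨V, Or.inr hV⟩

end Exchange

lemma isLocalRing_end_obj {𝒞 𝒟 : Type*} [Category* 𝒞] [Category* 𝒟] [Preadditive 𝒞]
    [Preadditive 𝒟] (F : 𝒞 ⥤ 𝒟) [F.Full] [F.Faithful] [F.Additive] (X : 𝒞)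
    [IsLocalRing (End X)] : IsLocalRing (End (F.obj X)) := by
  let e : End X ≃+* End (F.obj X) :=
    { (Functor.FullyFaithful.ofFullyFaithful F).mulEquivEnd X with
      map_add' := fun _ _ => F.map_add }
  have := e.injective.nontrivial
  refine { isUnit_or_isUnit_of_add_one := fun {a b} hab => ?_ }
  have hab' : e.symm a + e.symm b = 1 := by rw [← map_add, hab, map_one]
  simpa using IsLocalRing.isUnit_or_isUnit_of_add_one hab'

variable {𝒞 : Type*} [Category* 𝒞] [Preadditive 𝒞] [HasFiniteBiproducts 𝒞]

/-- Splitting the first summand off a finite biproduct. -/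
noncomputable def biproductFinSuccIso [HasBinaryBiproducts 𝒞] {n : ℕ} (f : Fin (n + 1) → 𝒞) :
    ⨁ f ≅ f 0 ⊞ ⨁ fun i : Fin n => f i.succ where
  hom := biprod.lift (biproduct.π f 0) (biproduct.lift fun i => biproduct.π f i.succ)
  inv := biprod.desc (biproduct.ι f 0) (biproduct.desc fun i => biproduct.ι f i.succ)
  hom_inv_id := by
    rw [biprod.lift_desc, biproduct.lift_desc, ← biproduct.total, Fin.sum_univ_succ]
  inv_hom_id := by
    classical
    ext i j
    · simp
    · simp [biproduct.ι_π_ne _ (Fin.succ_ne_zero _).symm]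
    · simp [biproduct.ι_π_ne _ (Fin.succ_ne_zero _)]
    · simp [biproduct.ι_π, Fin.succ_inj]

lemma essImage_toKaroubi_of_iso_biprod [HasBinaryBiproducts 𝒞] [HasBinaryBiproducts (Karoubi 𝒞)]
    {n : ℕ} (f : Fin n → 𝒞) (hf : ∀ i, IsLocalRing (End (f i))) {Y Z : Karoubi 𝒞}
    (α : Y ⊞ Z ≅ (toKaroubi 𝒞).obj (⨁ f)) : (toKaroubi 𝒞).essImage Y := by
  induction n generalizing Y Z with
  | zero =>
    have hzero : IsZero (⨁ f) := (IsZero.iff_id_eq_zero _).2 (biproduct.hom_ext _ _ (Fin.elim0 ·))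
    have hY : IsZero Y := ((toKaroubi 𝒞).map_isZero hzero).of_mono (biprod.inl ≫ α.hom)
    exact ⟨⨁ f, ⟨((toKaroubi 𝒞).map_isZero hzero).iso hY⟩⟩
  | succ n ih =>
    have := preservesBinaryBiproducts_of_preservesBiproducts (toKaroubi 𝒞)
    have := isLocalRing_end_obj (toKaroubi 𝒞) (f 0)
    obtain ⟨V, ⟨⟨eY⟩, ⟨eV⟩⟩ | ⟨-, ⟨eY⟩⟩⟩ := exists_iso_biprod_of_isLocalRing_end
      (α ≪≫ (toKaroubi 𝒞).mapIso (biproductFinSuccIso f) ≪≫ (toKaroubi 𝒞).mapBiprod _ _)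
    · obtain ⟨V', ⟨e⟩⟩ := ih _ (fun i => hf i.succ) eV
      exact ⟨f 0 ⊞ V', ⟨(toKaroubi 𝒞).mapBiprod _ _ ≪≫ biprod.mapIso (Iso.refl _) e ≪≫ eY⟩⟩
    · exact ih _ (fun i => hf i.succ) (biprod.braiding Y V ≪≫ eY)

theorem KrullSchmidt.isIdempotentComplete (h : KrullSchmidt 𝒞) : IsIdempotentComplete 𝒞 := by
  have := hasBinaryBiproducts_of_finite_biproducts 𝒞
  have := hasBinaryBiproducts_of_finite_biproducts (Karoubi 𝒞)
  have : (toKaroubi 𝒞).EssSurj := ⟨fun P => by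
    obtain ⟨n, f, e, hf⟩ := h P.X
    exact essImage_toKaroubi_of_iso_biprod f hf (P.decomposition ≪≫ (toKaroubi 𝒞).mapIso e)⟩
  have : (toKaroubi 𝒞).IsEquivalence := { }
  exact (isIdempotentComplete_iff_of_equivalence (toKaroubi 𝒞).asEquivalence).2 inferInstance

end IdempotentCompleteness

section AddClosure

open Opposite

variable {𝒞 𝒟 : Type*} [Category* 𝒞] [Preadditive 𝒞] [HasFiniteBiproducts 𝒞]
  [Category* 𝒟] [Preadditive 𝒟] [HasFiniteBiproducts 𝒟] {T G X : 𝒞}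

lemma mem_addSet_iff : X ∈ addSet 𝒞 T ↔
    ∃ (n : ℕ) (i : Fin n → (X ⟶ T)) (p : Fin n → (T ⟶ X)), ∑ j, i j ≫ p j = 𝟙 X := by
  constructor
  · rintro ⟨n, i, p, hip⟩
    refine ⟨n, fun j => i ≫ biproduct.π _ j, fun j => biproduct.ι (fun _ : Fin n => T) j ≫ p, ?_⟩
    calc ∑ j, (i ≫ biproduct.π _ j) ≫ biproduct.ι (fun _ : Fin n => T) j ≫ p
        = i ≫ (∑ j, biproduct.π _ j ≫ biproduct.ι (fun _ : Fin n => T) j) ≫ p := by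
          simp only [Preadditive.sum_comp, Preadditive.comp_sum, Category.assoc]
      _ = 𝟙 X := by rw [biproduct.total, Category.id_comp, hip]
  · rintro ⟨n, i, p, hip⟩
    exact ⟨n, biproduct.lift i, biproduct.desc p, by rw [biproduct.lift_desc, hip]⟩

lemma biproduct_mem_addSet (T : 𝒞) (n : ℕ) : (⨁ fun _ : Fin n => T) ∈ addSet 𝒞 T :=
  ⟨n, 𝟙 _, 𝟙 _, Category.comp_id _⟩

lemma mem_addSet_of_retract (h : Retract T G) (hX : X ∈ addSet 𝒞 T) : X ∈ addSet 𝒞 G := by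
  obtain ⟨n, i, p, hip⟩ := mem_addSet_iff.1 hX
  exact mem_addSet_iff.2 ⟨n, fun j => i j ≫ h.i, fun j => h.r ≫ p j, by simpa using hip⟩

lemma map_mem_addSet (F : 𝒞 ⥤ 𝒟) [F.Additive] (hX : X ∈ addSet 𝒞 T) :
    F.obj X ∈ addSet 𝒟 (F.obj T) := by
  obtain ⟨n, i, p, hip⟩ := mem_addSet_iff.1 hX
  refine mem_addSet_iff.2 ⟨n, fun j => F.map (i j), fun j => F.map (p j), ?_⟩
  simp only [← F.map_comp, ← F.map_sum, hip, F.map_id]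

instance hasFiniteBiproducts_op : HasFiniteBiproducts 𝒞ᵒᵖ :=
  HasFiniteBiproducts.of_hasFiniteProducts

lemma op_mem_addSet_iff : op X ∈ addSet 𝒞ᵒᵖ (op T) ↔ X ∈ addSet 𝒞 T := by
  simp only [mem_addSet_iff]
  constructor
  · rintro ⟨n, i, p, hip⟩
    refine ⟨n, fun j => (p j).unop, fun j => (i j).unop, Quiver.Hom.op_inj ?_⟩
    simpa using hip
  · rintro ⟨n, i, p, hip⟩
    exact ⟨n, fun j => (p j).op, fun j => (i j).op, by simp only [← op_comp, ← op_sum, hip, op_id]⟩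

end AddClosure

section LinearPresheaf

open Opposite

instance oppositeLinear {𝕜 𝒞 : Type*} [Semiring 𝕜] [Category* 𝒞] [Preadditive 𝒞]
    [Linear 𝕜 𝒞] : Linear 𝕜 𝒞ᵒᵖ where
  homModule _ _ :=
    { smul := fun r f => (r • f.unop).op
      one_smul := fun f => Quiver.Hom.unop_inj (one_smul 𝕜 f.unop)
      mul_smul := fun r s f => Quiver.Hom.unop_inj (mul_smul r s f.unop)
      smul_zero := fun r => Quiver.Hom.unop_inj (smul_zero r)
      smul_add := fun r f g => Quiver.Hom.unop_inj (smul_add r f.unop g.unop)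
      add_smul := fun r s f => Quiver.Hom.unop_inj (add_smul r s f.unop)
      zero_smul := fun f => Quiver.Hom.unop_inj (zero_smul 𝕜 f.unop) }
  smul_comp _ _ _ r f g := Quiver.Hom.unop_inj (Linear.comp_smul _ _ _ g.unop r f.unop)
  comp_smul _ _ _ f r g := Quiver.Hom.unop_inj (Linear.smul_comp _ _ _ r g.unop f.unop)

/-- `Quiver.Hom.op` as a linear equivalence. -/
def opLinearEquiv (𝕜 : Type*) {𝒞 : Type*} [Semiring 𝕜] [Category* 𝒞] [Preadditive 𝒞]
    [Linear 𝕜 𝒞] (X Y : 𝒞) : (X ⟶ Y) ≃ₗ[𝕜] (op Y ⟶ op X) where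
  toEquiv := Quiver.Hom.opEquiv
  map_add' _ _ := rfl
  map_smul' _ _ := rfl

universe w

variable {𝕜 𝒞 : Type*} [CommRing 𝕜] [Category* 𝒞] [Preadditive 𝒞] [Linear 𝕜 𝒞]

instance linearYoneda_obj_linear (B : 𝒞) : ((linearYoneda 𝕜 𝒞).obj B).Linear 𝕜 where
  map_smul f r := by
    ext g
    exact Linear.smul_comp _ _ _ r f.unop g

variable (F : 𝒞ᵒᵖ ⥤ ModuleCat.{w} 𝕜) [F.Additive] [F.Linear 𝕜]

/-- The morphism `Hom(-, B) ⟶ F` of linear presheaves which the Yoneda lemma attaches to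
`β : F B`, evaluated at `X`. -/
def linearYonedaMap {B : 𝒞} (β : F.obj (op B)) (X : 𝒞) : (X ⟶ B) →ₗ[𝕜] F.obj (op X) where
  toFun f := F.map f.op β
  map_add' f g := by rw [op_add, F.map_add]; rfl
  map_smul' r f := by
    have : F.map (r • f).op = r • F.map f.op := F.map_smul r f.op
    rw [this]; rfl

variable {F} {B B' X Y G : 𝒞} {β : F.obj (op B)}

lemma linearYonedaMap_comp (f : X ⟶ Y) (g : Y ⟶ B) :
    linearYonedaMap F β X (f ≫ g) = F.map f.op (linearYonedaMap F β Y g) := by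
  simp [linearYonedaMap]

lemma linearYonedaMap_id (β : F.obj (op B)) : linearYonedaMap F β B (𝟙 B) = β := by
  simp [linearYonedaMap]

lemma linearYonedaMap_comp_of_eq {β' : F.obj (op B')} {j : B ⟶ B'}
    (hj : linearYonedaMap F β' B j = β) (f : X ⟶ B) :
    linearYonedaMap F β' X (f ≫ j) = linearYonedaMap F β X f := by
  rw [linearYonedaMap_comp, hj]; rfl

lemma linearYonedaMap_surjective_of_eq {β' : F.obj (op B')} {j : B ⟶ B'}
    (hj : linearYonedaMap F β' B j = β) (h : Function.Surjective (linearYonedaMap F β X)) :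
    Function.Surjective (linearYonedaMap F β' X) := fun x => by
  obtain ⟨f, rfl⟩ := h x
  exact ⟨f ≫ j, linearYonedaMap_comp_of_eq hj f⟩

variable [HasFiniteBiproducts 𝒞]

lemma linearYonedaMap_surjective_of_mem_addSet (hX : X ∈ addSet 𝒞 G)
    (h : Function.Surjective (linearYonedaMap F β G)) :
    Function.Surjective (linearYonedaMap F β X) := fun x => by
  obtain ⟨n, i, p, hip⟩ := mem_addSet_iff.1 hX
  choose f hf using fun j => h (F.map (p j).op x)
  refine ⟨∑ j, i j ≫ f j, ?_⟩
  calc linearYonedaMap F β X (∑ j, i j ≫ f j)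
      = linearYonedaMap F x X (∑ j, i j ≫ p j) := by
        simp only [map_sum, linearYonedaMap_comp, hf]; rfl
    _ = x := by rw [hip, linearYonedaMap_id]

lemma ker_linearYonedaMap_le_of_mem_addSet (hX : X ∈ addSet 𝒞 G) {j : B ⟶ B'}
    (h : LinearMap.ker (linearYonedaMap F β G) ≤ LinearMap.ker (Linear.rightComp 𝕜 G j)) :
    LinearMap.ker (linearYonedaMap F β X) ≤ LinearMap.ker (Linear.rightComp 𝕜 X j) := fun f hf => by
  obtain ⟨n, i, p, hip⟩ := mem_addSet_iff.1 hX
  have hpf (l) : (p l ≫ f) ≫ j = 0 := h (by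
    rw [LinearMap.mem_ker] at hf ⊢
    rw [linearYonedaMap_comp, hf, map_zero])
  calc f ≫ j = (∑ l, i l ≫ p l) ≫ f ≫ j := by rw [hip, Category.id_comp]
    _ = ∑ l, i l ≫ (p l ≫ f) ≫ j := by simp only [Preadditive.sum_comp, Category.assoc]
    _ = 0 := by simp only [hpf, comp_zero, Finset.sum_const_zero]

lemma exists_le_range_linearYonedaMap {V : Submodule 𝕜 (F.obj (op G))} (hV : V.FG) :
    ∃ (n : ℕ) (β : F.obj (op (⨁ fun _ : Fin n => G))),
      (∀ i, linearYonedaMap F β G (biproduct.ι (fun _ : Fin n => G) i) ∈ V) ∧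
        V ≤ LinearMap.range (linearYonedaMap F β G) := by
  classical
  obtain ⟨n, s, hs⟩ := Submodule.fg_iff_exists_fin_generating_family.1 hV
  let β := ∑ j, F.map (biproduct.π (fun _ : Fin n => G) j).op (s j)
  have hβ (i) : linearYonedaMap F β G (biproduct.ι (fun _ : Fin n => G) i) = s i := by
    calc linearYonedaMap F β G (biproduct.ι (fun _ : Fin n => G) i)
        = ∑ j, linearYonedaMap F (s j) G (biproduct.ι (fun _ => G) i ≫ biproduct.π _ j) := by
          simp only [linearYonedaMap_comp]
          exact map_sum (F.map (biproduct.ι (fun _ : Fin n => G) i).op).hom _ _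
      _ = s i := by
          rw [Finset.sum_eq_single i (fun j _ hj => by rw [biproduct.ι_π_ne _ hj.symm, map_zero])
            (by simp), biproduct.ι_π_self, linearYonedaMap_id]
  refine ⟨n, β, fun i => ?_, ?_⟩
  · rw [hβ, ← hs]
    exact Submodule.subset_span ⟨i, rfl⟩
  · rw [← hs, Submodule.span_le]
    rintro _ ⟨i, rfl⟩
    exact ⟨_, hβ i⟩

lemma exists_le_range_rightComp {V : Submodule 𝕜 (G ⟶ B)} (hV : V.FG) :
    ∃ (n : ℕ) (c : (⨁ fun _ : Fin n => G) ⟶ B),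
      (∀ i, biproduct.ι (fun _ : Fin n => G) i ≫ c ∈ V) ∧
        V ≤ LinearMap.range (Linear.rightComp 𝕜 G c) :=
  exists_le_range_linearYonedaMap (F := (linearYoneda 𝕜 𝒞).obj B) hV

lemma exists_linearYonedaMap_surjective [Module.Finite 𝕜 (F.obj (op G))] :
    ∃ (B : 𝒞) (β : F.obj (op B)), Function.Surjective (linearYonedaMap F β G) := by
  obtain ⟨n, β, -, hβ⟩ := exists_le_range_linearYonedaMap (F := F) (G := G) Module.Finite.fg_top
  exact ⟨_, β, LinearMap.range_eq_top.1 (top_le_iff.1 hβ)⟩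

end LinearPresheaf

section Representability

open Opposite
open scoped Pretriangulated.Opposite

universe w

lemma exists_linearYonedaMap_bijective_of_ker_le {𝕜 𝒞 : Type*} [CommRing 𝕜] [Category* 𝒞]
    [Preadditive 𝒞] [Linear 𝕜 𝒞] [IsIdempotentComplete 𝒞] {F : 𝒞ᵒᵖ ⥤ ModuleCat.{w} 𝕜}
    [F.Additive] [F.Linear 𝕜] {B B' : 𝒞} {β : F.obj (op B)} {β' : F.obj (op B')} {j : B ⟶ B'}
    (hj : linearYonedaMap F β' B j = β)
    (hs : ∀ X, Function.Surjective (linearYonedaMap F β X))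
    (hk : ∀ X, LinearMap.ker (linearYonedaMap F β X) ≤ LinearMap.ker (Linear.rightComp 𝕜 X j)) :
    ∃ (S : 𝒞) (σ : F.obj (op S)), ∀ X, Function.Bijective (linearYonedaMap F σ X) := by
  obtain ⟨u, hu⟩ := hs B' β'
  have hcancel {X : 𝒞} {f g : X ⟶ B} (h : linearYonedaMap F β X f = linearYonedaMap F β X g) :
      f ≫ j = g ≫ j := by
    have : (f - g) ≫ j = 0 := hk X (by rw [LinearMap.mem_ker, map_sub, h, sub_self])
    rwa [Preadditive.sub_comp, sub_eq_zero] at this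
  -- `F` is the image of the natural idempotent which `β'` transports to `u ≫ j`.
  have hidem : (u ≫ j) ≫ u ≫ j = u ≫ j := by
    rw [← Category.assoc]
    refine hcancel ?_
    rw [linearYonedaMap_comp_of_eq hu, linearYonedaMap_comp_of_eq hj]
  obtain ⟨S, i, p, hip, hpi⟩ := IsIdempotentComplete.idempotents_split B' (u ≫ j) hidem
  have hi {X : 𝒞} (f : X ⟶ S) : (f ≫ i ≫ u) ≫ j = f ≫ i := by
    calc (f ≫ i ≫ u) ≫ j = f ≫ i ≫ p ≫ i := by simp only [Category.assoc, hpi]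
      _ = f ≫ i := by rw [reassoc_of% hip]
  have hp : linearYonedaMap F (linearYonedaMap F β' S i) B' p = β' := by
    rw [← linearYonedaMap_comp_of_eq rfl, hpi, linearYonedaMap_comp_of_eq hj, hu]
  refine ⟨S, linearYonedaMap F β' S i, fun X => ⟨fun f g hfg => ?_, ?_⟩⟩
  · have hfg' : (f ≫ i ≫ u) ≫ j = (g ≫ i ≫ u) ≫ j := hcancel (by
      simp only [← Category.assoc _ i u, linearYonedaMap_comp_of_eq hu]
      simpa only [linearYonedaMap_comp_of_eq rfl] using hfg)
    rw [hi, hi] at hfg'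
    simpa [hip] using hfg' =≫ p
  · exact linearYonedaMap_surjective_of_eq hp (linearYonedaMap_surjective_of_eq hj (hs X))

section Devissage

variable {𝕜 𝒞 : Type*} [CommRing 𝕜] [Category* 𝒞] [Preadditive 𝒞] [Linear 𝕜 𝒞]
  [HasZeroObject 𝒞] [HasShift 𝒞 ℤ] [∀ n : ℤ, (shiftFunctor 𝒞 n).Additive] [Pretriangulated 𝒞]
  {F : 𝒞ᵒᵖ ⥤ ModuleCat.{w} 𝕜} [F.Additive] [F.Linear 𝕜] [F.IsHomological]
  {Δ : Triangle 𝒞}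

lemma exists_linearYonedaMap_mor₂_eq (hΔ : Δ ∈ distTriang 𝒞) {x : F.obj (op Δ.obj₂)}
    (hx : linearYonedaMap F x Δ.obj₁ Δ.mor₁ = 0) :
    ∃ y : F.obj (op Δ.obj₃), linearYonedaMap F y Δ.obj₂ Δ.mor₂ = x :=
  ShortComplex.moduleCat_exact_iff _ |>.1 (F.map_distinguished_op_exact Δ hΔ) x hx

variable {B₀ B₁ B₂ : 𝒞} {β₀ : F.obj (op B₀)} {β₁ : F.obj (op B₁)}

lemma linearYonedaMap_surjective_obj₃ (hΔ : Δ ∈ distTriang 𝒞) {j : B₀ ⟶ B₁}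
    (hj : linearYonedaMap F β₁ B₀ j = β₀)
    (hk : LinearMap.ker (linearYonedaMap F β₀ Δ.obj₁) ≤ LinearMap.ker (Linear.rightComp 𝕜 _ j))
    (hs₀ : Function.Surjective (linearYonedaMap F β₀ Δ.obj₂))
    (hs₁ : Function.Surjective (linearYonedaMap F β₁ (Δ.obj₁⟦(1 : ℤ)⟧))) :
    Function.Surjective (linearYonedaMap F β₁ Δ.obj₃) := fun x => by
  obtain ⟨f, hf⟩ := hs₀ (linearYonedaMap F x Δ.obj₂ Δ.mor₂)
  have hfj : Δ.mor₁ ≫ f ≫ j = 0 := by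
    rw [← Category.assoc]
    refine hk ?_
    rw [LinearMap.mem_ker, linearYonedaMap_comp, hf, ← linearYonedaMap_comp,
      comp_distTriang_mor_zero₁₂ _ hΔ, map_zero]
  obtain ⟨y, hy⟩ := Triangle.yoneda_exact₂ Δ hΔ _ hfj
  have hxy : linearYonedaMap F (x - linearYonedaMap F β₁ Δ.obj₃ y) Δ.obj₂ Δ.mor₂ = 0 := by
    calc linearYonedaMap F (x - linearYonedaMap F β₁ Δ.obj₃ y) Δ.obj₂ Δ.mor₂
        = linearYonedaMap F x Δ.obj₂ Δ.mor₂ - linearYonedaMap F β₁ Δ.obj₂ (Δ.mor₂ ≫ y) := by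
          rw [linearYonedaMap_comp]
          exact map_sub (F.map Δ.mor₂.op).hom _ _
      _ = 0 := by rw [← hy, linearYonedaMap_comp_of_eq hj, hf, sub_self]
  obtain ⟨z, hz⟩ := exists_linearYonedaMap_mor₂_eq (rot_of_distTriang _ hΔ) hxy
  obtain ⟨g, rfl⟩ := hs₁ z
  have hg : linearYonedaMap F β₁ Δ.obj₃ (Δ.mor₃ ≫ g) = x - linearYonedaMap F β₁ Δ.obj₃ y :=
    (linearYonedaMap_comp_of_eq (F := F) (β' := β₁) rfl Δ.mor₃).trans hz
  exact ⟨y + Δ.mor₃ ≫ g, by rw [map_add, hg, add_sub_cancel]⟩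

lemma ker_linearYonedaMap_le_obj₃ (hΔ : Δ ∈ distTriang 𝒞) {j₀ : B₀ ⟶ B₁} {j₁ : B₁ ⟶ B₂}
    (hj : linearYonedaMap F β₁ B₀ j₀ = β₀)
    (hk₀ : LinearMap.ker (linearYonedaMap F β₀ Δ.obj₂) ≤ LinearMap.ker (Linear.rightComp 𝕜 _ j₀))
    (hk₁ : LinearMap.ker (linearYonedaMap F β₁ (Δ.obj₁⟦(1 : ℤ)⟧)) ≤
      LinearMap.ker (Linear.rightComp 𝕜 _ j₁))
    (hs : Function.Surjective (linearYonedaMap F β₁ (Δ.obj₂⟦(1 : ℤ)⟧))) :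
    LinearMap.ker (linearYonedaMap F β₀ Δ.obj₃) ≤
      LinearMap.ker (Linear.rightComp 𝕜 _ (j₀ ≫ j₁)) := fun x hx => by
  rw [LinearMap.mem_ker] at hx
  have hxj : Δ.mor₂ ≫ x ≫ j₀ = 0 := by
    rw [← Category.assoc]
    exact hk₀ (by rw [LinearMap.mem_ker, linearYonedaMap_comp, hx, map_zero])
  obtain ⟨y, hy⟩ := Triangle.yoneda_exact₃ Δ hΔ _ hxj
  have hy₀ : linearYonedaMap F (linearYonedaMap F β₁ _ y) Δ.obj₃ Δ.mor₃ = 0 := by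
    rw [← linearYonedaMap_comp_of_eq (F := F) (β' := β₁) rfl, ← hy,
      linearYonedaMap_comp_of_eq hj, hx]
  obtain ⟨z, hz⟩ := exists_linearYonedaMap_mor₂_eq
    (rot_of_distTriang _ (rot_of_distTriang _ hΔ)) hy₀
  obtain ⟨w, rfl⟩ := hs z
  have hw : linearYonedaMap F β₁ _ ((-Δ.mor₁⟦1⟧') ≫ w) = linearYonedaMap F β₁ _ y :=
    (linearYonedaMap_comp_of_eq rfl _).trans hz
  have hyw : (y - (-Δ.mor₁⟦1⟧') ≫ w) ≫ j₁ = 0 := hk₁ (by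
    rw [LinearMap.mem_ker, map_sub, hw, sub_self])
  calc x ≫ j₀ ≫ j₁ = Δ.mor₃ ≫ y ≫ j₁ := by rw [← Category.assoc, hy, Category.assoc]
    _ = Δ.mor₃ ≫ (y - (-Δ.mor₁⟦1⟧') ≫ w) ≫ j₁ := by
      simp [reassoc_of% comp_distTriang_mor_zero₃₁ _ hΔ]
    _ = 0 := by rw [hyw, comp_zero]

end Devissage

section TwoTermResolutions

variable {𝒞 : Type*} [Category* 𝒞] [Preadditive 𝒞] [HasZeroObject 𝒞] [HasShift 𝒞 ℤ]
  [∀ n : ℤ, (shiftFunctor 𝒞 n).Additive] [Pretriangulated 𝒞] [HasFiniteBiproducts 𝒞]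

/-- Every object is the cone of a morphism `T₁ ⟶ T₀` such that `T₁`, `T₀` and their shifts
are in `add G`. -/
def HasTwoTermResolutions (G : 𝒞) : Prop :=
  ∀ X : 𝒞, ∃ (T₁ T₀ : 𝒞) (f : T₁ ⟶ T₀) (g : T₀ ⟶ X) (h : X ⟶ T₁⟦(1 : ℤ)⟧),
    Triangle.mk f g h ∈ distTriang 𝒞 ∧ (T₁ ∈ addSet 𝒞 G ∧ T₁⟦(1 : ℤ)⟧ ∈ addSet 𝒞 G) ∧
      T₀ ∈ addSet 𝒞 G ∧ T₀⟦(1 : ℤ)⟧ ∈ addSet 𝒞 G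

variable {𝕜 : Type*} [CommRing 𝕜] [Linear 𝕜 𝒞] {F : 𝒞ᵒᵖ ⥤ ModuleCat.{w} 𝕜} [F.Additive]
  [F.Linear 𝕜] [F.IsHomological] {G : 𝒞}

lemma exists_ker_linearYonedaMap_le {B : 𝒞} [IsNoetherian 𝕜 (G ⟶ B)] (β : F.obj (op B)) :
    ∃ (B' : 𝒞) (j : B ⟶ B') (β' : F.obj (op B')), linearYonedaMap F β' B j = β ∧
      LinearMap.ker (linearYonedaMap F β G) ≤ LinearMap.ker (Linear.rightComp 𝕜 G j) := by
  obtain ⟨n, c, hc, hle⟩ := exists_le_range_rightComp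
    (IsNoetherian.noetherian (LinearMap.ker (linearYonedaMap F β G)))
  have hβc : linearYonedaMap F β _ c = 0 := by
    calc linearYonedaMap F β _ c
        = linearYonedaMap F β _ ((∑ i, biproduct.π _ i ≫ biproduct.ι (fun _ => G) i) ≫ c) := by
          rw [biproduct.total, Category.id_comp]
      _ = ∑ i, F.map (biproduct.π _ i).op
            (linearYonedaMap F β G (biproduct.ι (fun _ => G) i ≫ c)) := by
          simp only [Preadditive.sum_comp, map_sum, Category.assoc, linearYonedaMap_comp]
      _ = 0 := Finset.sum_eq_zero fun i _ => by rw [LinearMap.mem_ker.1 (hc i), map_zero]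
  obtain ⟨B', j, δ, hΔ⟩ := distinguished_cocone_triangle c
  obtain ⟨β', hβ'⟩ := exists_linearYonedaMap_mor₂_eq hΔ hβc
  refine ⟨B', j, β', hβ', fun f hf => ?_⟩
  obtain ⟨g, rfl⟩ := hle hf
  calc (g ≫ c) ≫ j = g ≫ c ≫ j := Category.assoc _ _ _
    _ = 0 := by rw [show c ≫ j = 0 from comp_distTriang_mor_zero₁₂ _ hΔ, comp_zero]

theorem exists_linearYonedaMap_bijective [IsIdempotentComplete 𝒞]
    [∀ X Y : 𝒞, IsNoetherian 𝕜 (X ⟶ Y)] [Module.Finite 𝕜 (F.obj (op G))]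
    (hG : HasTwoTermResolutions G) :
    ∃ (S : 𝒞) (σ : F.obj (op S)), ∀ X, Function.Bijective (linearYonedaMap F σ X) := by
  obtain ⟨B₀, β₀, hs₀⟩ := exists_linearYonedaMap_surjective (F := F) (G := G)
  obtain ⟨B₁, j₀, β₁, hj₀, hk₀⟩ := exists_ker_linearYonedaMap_le (G := G) β₀
  obtain ⟨B₂, j₁, β₂, hj₁, hk₁⟩ := exists_ker_linearYonedaMap_le (G := G) β₁
  obtain ⟨B₃, j₂, β₃, hj₂, hk₂⟩ := exists_ker_linearYonedaMap_le (G := G) β₂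
  have hs₁ := linearYonedaMap_surjective_of_eq hj₀ hs₀
  have hs₂ := linearYonedaMap_surjective_of_eq hj₁ hs₁
  refine exists_linearYonedaMap_bijective_of_ker_le (β := β₁) (β' := β₃) (j := j₁ ≫ j₂) ?_
    (fun X => ?_) (fun X => ?_)
  · rw [linearYonedaMap_comp_of_eq hj₂, hj₁]
  all_goals obtain ⟨T₁, T₀, f, g, h, hΔ, ⟨hT₁, hT₁'⟩, hT₀, hT₀'⟩ := hG X
  · exact linearYonedaMap_surjective_obj₃ hΔ hj₀ (ker_linearYonedaMap_le_of_mem_addSet hT₁ hk₀)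
      (linearYonedaMap_surjective_of_mem_addSet hT₀ hs₀)
      (linearYonedaMap_surjective_of_mem_addSet hT₁' hs₁)
  · exact ker_linearYonedaMap_le_obj₃ hΔ hj₁ (ker_linearYonedaMap_le_of_mem_addSet hT₀ hk₁)
      (ker_linearYonedaMap_le_of_mem_addSet hT₁' hk₂)
      (linearYonedaMap_surjective_of_mem_addSet hT₀' hs₂)

end TwoTermResolutions

end Representability

section ClusterTilting

open Opposite
open scoped Pretriangulated.Opposite

variable {𝒞 : Type*} [Category* 𝒞] [Preadditive 𝒞] [HasShift 𝒞 ℤ] [HasFiniteBiproducts 𝒞] {T : 𝒞}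

protected lemma ClusterTilting.op (hT : ClusterTilting 𝒞 T) : ClusterTilting 𝒞ᵒᵖ (op T) := by
  have forall_eq_zero_iff (X Y : 𝒞) :
      (∀ f : op Y ⟶ (op X)⟦(1 : ℤ)⟧, f = 0) ↔ ∀ f : X ⟶ Y⟦(1 : ℤ)⟧, f = 0 := by
    rw [← subsingleton_iff_forall_eq, ← subsingleton_iff_forall_eq]
    exact (ShiftedHom.opEquiv (X := X) (Y := Y) (1 : ℤ)).subsingleton_congr.symm
  intro X
  rw [← op_unop X, op_mem_addSet_iff, forall_eq_zero_iff, forall_eq_zero_iff]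
  exact (hT X.unop).symm

variable [HasZeroObject 𝒞] [∀ n : ℤ, (shiftFunctor 𝒞 n).Additive] [Pretriangulated 𝒞]

lemma ClusterTilting.hasTwoTermResolutions {𝕜 : Type*} [CommRing 𝕜] [Linear 𝕜 𝒞]
    [∀ X : 𝒞, Module.Finite 𝕜 (T ⟶ X)] (hT : ClusterTilting 𝒞 T) :
    HasTwoTermResolutions (T ⊞ T⟦(1 : ℤ)⟧) := fun X => by
  obtain ⟨n, b, -, hb⟩ := exists_le_range_rightComp (𝕜 := 𝕜) (G := T) (B := X)
    Module.Finite.fg_top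
  obtain ⟨Y, a, c, hΔ⟩ := distinguished_cocone_triangle₁ b
  have hTn := biproduct_mem_addSet T n
  have hY : Y ∈ addSet 𝒞 T := (hT Y).1.2 fun f => by
    obtain ⟨l, rfl⟩ := Triangle.coyoneda_exact₁ _ hΔ f ((hT _).1.1 hTn _)
    obtain ⟨g, rfl⟩ := hb (Submodule.mem_top (x := l))
    calc (g ≫ b) ≫ c = g ≫ b ≫ c := Category.assoc _ _ _
      _ = 0 := by rw [show b ≫ c = 0 from comp_distTriang_mor_zero₂₃ _ hΔ, comp_zero]
  have mem_add {Z : 𝒞} (hZ : Z ∈ addSet 𝒞 T) : Z ∈ addSet 𝒞 (T ⊞ T⟦(1 : ℤ)⟧) ∧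
      Z⟦(1 : ℤ)⟧ ∈ addSet 𝒞 (T ⊞ T⟦(1 : ℤ)⟧) :=
    ⟨mem_addSet_of_retract ⟨biprod.inl, biprod.fst, biprod.inl_fst⟩ hZ,
      mem_addSet_of_retract ⟨biprod.inr, biprod.snd, biprod.inr_snd⟩
        (map_mem_addSet (shiftFunctor 𝒞 (1 : ℤ)) hZ)⟩
  exact ⟨Y, _, a, b, c, hΔ, mem_add hY, mem_add hTn⟩

end ClusterTilting

section SerreTraces

open Opposite
open scoped Pretriangulated.Opposite

section TracePairing

variable (𝕜 : Type*) {𝒞 : Type*} [CommRing 𝕜] [Category* 𝒞] [Preadditive 𝒞] [Linear 𝕜 𝒞]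

/-- The presheaf `X ↦ Hom(A, X)*`, which a Serre functor represents by the image of `A`. -/
def dualCoyoneda (A : 𝒞) : 𝒞ᵒᵖ ⥤ ModuleCat 𝕜 where
  obj X := ModuleCat.of 𝕜 (Module.Dual 𝕜 (A ⟶ X.unop))
  map f := ModuleCat.ofHom (Linear.rightComp 𝕜 A f.unop).dualMap

instance (A : 𝒞) : (dualCoyoneda 𝕜 A).Additive where
  map_add {X Y f g} := by
    ext (φ : Module.Dual 𝕜 _)
    exact LinearMap.ext fun h =>
      (congrArg φ (Preadditive.comp_add _ _ _ h f.unop g.unop)).trans (map_add φ _ _)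

instance (A : 𝒞) : (dualCoyoneda 𝕜 A).Linear 𝕜 where
  map_smul f r := by
    ext (φ : Module.Dual 𝕜 _)
    exact LinearMap.ext fun h =>
      (congrArg φ (Linear.comp_smul _ _ _ h r f.unop)).trans (map_smul φ _ _)

variable {𝕜}

/-- The pairing `(f, g) ↦ β (f ≫ g)` induced by a linear form `β` on `Hom(A, S)`. -/
def tracePairing {A S : 𝒞} (β : Module.Dual 𝕜 (A ⟶ S)) (X : 𝒞) :
    (A ⟶ X) →ₗ[𝕜] (X ⟶ S) →ₗ[𝕜] 𝕜 :=
  (Linear.comp A X S).compr₂ β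

lemma tracePairing_comp {A S X Y : 𝒞} (β : Module.Dual 𝕜 (A ⟶ S)) (f : A ⟶ X) (g : X ⟶ Y)
    (h : Y ⟶ S) : tracePairing β Y (f ≫ g) h = tracePairing β X f (g ≫ h) :=
  congrArg β (Category.assoc f g h)

/-- A linear form on `Hom(A, S)` exhibiting `S` as the image of `A` under a Serre functor:
the composition pairings `Hom(A, X) × Hom(X, S) → 𝕜` are all perfect. -/
def IsSerreTrace {A S : 𝒞} (β : Module.Dual 𝕜 (A ⟶ S)) : Prop :=
  ∀ X, (tracePairing β X).IsPerfPair

lemma IsSerreTrace.of_op {A S : 𝒞} {β : Module.Dual 𝕜 (op S ⟶ op A)} (hβ : IsSerreTrace β) :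
    IsSerreTrace (β ∘ₗ (opLinearEquiv 𝕜 A S).toLinearMap) := fun X =>
  have := hβ (op X)
  .congr (tracePairing β (op X)).flip (opLinearEquiv 𝕜 A X) (opLinearEquiv 𝕜 X S) _ rfl

end TracePairing

section Existence

variable {𝕜 𝒞 : Type*} [Field 𝕜] [Category* 𝒞] [Preadditive 𝒞] [Linear 𝕜 𝒞]

lemma IsSerreTrace.of_bijective_linearYonedaMap [∀ X Y : 𝒞, FiniteDimensional 𝕜 (X ⟶ Y)]
    {A S : 𝒞} {β : Module.Dual 𝕜 (A ⟶ S)}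
    (h : ∀ X, Function.Bijective (linearYonedaMap (dualCoyoneda 𝕜 A) β X)) : IsSerreTrace β :=
  fun X => .flip (.of_bijective (tracePairing β X).flip (h X))

variable [HasZeroObject 𝒞] [HasShift 𝒞 ℤ] [∀ n : ℤ, (shiftFunctor 𝒞 n).Additive]
  [Pretriangulated 𝒞]

instance (A : 𝒞) : (dualCoyoneda 𝕜 A).IsHomological where
  exact Δ hΔ := by
    rw [ShortComplex.moduleCat_exact_iff_ker_sub_range]
    change LinearMap.ker (Linear.rightComp 𝕜 A Δ.mor₂.unop).dualMap ≤
      LinearMap.range (Linear.rightComp 𝕜 A Δ.mor₁.unop).dualMap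
    rw [LinearMap.range_dualMap_eq_dualAnnihilator_ker]
    intro φ hφ
    rw [Submodule.mem_dualAnnihilator]
    intro x hx
    obtain ⟨l, rfl⟩ := Triangle.coyoneda_exact₂ _ (unop_distinguished Δ hΔ) x hx
    exact LinearMap.congr_fun hφ l

variable [HasFiniteBiproducts 𝒞] [IsIdempotentComplete 𝒞]
  [∀ X Y : 𝒞, FiniteDimensional 𝕜 (X ⟶ Y)] {T : 𝒞}

theorem ClusterTilting.exists_isSerreTrace_from (hT : ClusterTilting 𝒞 T) (A : 𝒞) :
    ∃ (S : 𝒞) (β : Module.Dual 𝕜 (A ⟶ S)), IsSerreTrace β := by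
  have (X : 𝒞) : Module.Finite 𝕜 ((dualCoyoneda 𝕜 A).obj (op X)) :=
    inferInstanceAs (FiniteDimensional 𝕜 (Module.Dual 𝕜 (A ⟶ X)))
  obtain ⟨S, β, hβ⟩ := exists_linearYonedaMap_bijective (F := dualCoyoneda 𝕜 A)
    (hT.hasTwoTermResolutions (𝕜 := 𝕜))
  exact ⟨S, β, .of_bijective_linearYonedaMap hβ⟩

theorem ClusterTilting.exists_isSerreTrace_to (hT : ClusterTilting 𝒞 T) (S : 𝒞) :
    ∃ (A : 𝒞) (β : Module.Dual 𝕜 (A ⟶ S)), IsSerreTrace β := by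
  have (X Y : 𝒞ᵒᵖ) : FiniteDimensional 𝕜 (X ⟶ Y) :=
    (opLinearEquiv 𝕜 Y.unop X.unop).finiteDimensional
  obtain ⟨A, β, hβ⟩ := hT.op.exists_isSerreTrace_from (𝕜 := 𝕜) (op S)
  exact ⟨A.unop, _, hβ.of_op⟩

end Existence

end SerreTraces

section SerreFunctor

variable {𝕜 𝒞 : Type*} [CommRing 𝕜] [Category* 𝒞] [Preadditive 𝒞] [Linear 𝕜 𝒞]

namespace IsSerreTrace

variable {A S X : 𝒞} {β : Module.Dual 𝕜 (A ⟶ S)}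

lemma hom_ext_to (hβ : IsSerreTrace β) {f g : X ⟶ S} (h : ∀ l : A ⟶ X, β (l ≫ f) = β (l ≫ g)) :
    f = g :=
  (hβ X).bijective_right.1 (LinearMap.ext h)

lemma hom_ext_from (hβ : IsSerreTrace β) {f g : A ⟶ X} (h : ∀ l : X ⟶ S, β (f ≫ l) = β (g ≫ l)) :
    f = g :=
  (hβ X).bijective_left.1 (LinearMap.ext h)

lemma exists_hom_to (hβ : IsSerreTrace β) (φ : Module.Dual 𝕜 (A ⟶ X)) :
    ∃ f : X ⟶ S, ∀ l : A ⟶ X, β (l ≫ f) = φ l :=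
  ((hβ X).bijective_right.2 φ).imp fun _ => LinearMap.congr_fun

lemma exists_hom_from (hβ : IsSerreTrace β) (φ : Module.Dual 𝕜 (X ⟶ S)) :
    ∃ f : A ⟶ X, ∀ l : X ⟶ S, β (f ≫ l) = φ l :=
  ((hβ X).bijective_left.2 φ).imp fun _ => LinearMap.congr_fun

lemma nonempty_iso (hβ : IsSerreTrace β) {S' : 𝒞} {β' : Module.Dual 𝕜 (A ⟶ S')}
    (hβ' : IsSerreTrace β') :
    Nonempty (S ≅ S') := by
  obtain ⟨s, hs⟩ := hβ'.exists_hom_to β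
  obtain ⟨t, ht⟩ := hβ.exists_hom_to β'
  exact ⟨⟨s, t, hβ.hom_ext_to fun l => by rw [← Category.assoc, ht, hs, Category.comp_id],
    hβ'.hom_ext_to fun l => by rw [← Category.assoc, hs, ht, Category.comp_id]⟩⟩

end IsSerreTrace

/-- `S` with the trace forms `β` satisfies the axioms of a Serre functor, up to essential
surjectivity: the trace pairings are perfect and `S.map a` is adjoint to precomposition
with `a`. -/
structure IsSerreFunctor (S : 𝒞 ⥤ 𝒞) (β : ∀ A, Module.Dual 𝕜 (A ⟶ S.obj A)) : Prop where
  isSerreTrace (A : 𝒞) : IsSerreTrace (β A)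
  apply_comp_map {A B : 𝒞} (a : A ⟶ B) (l : B ⟶ S.obj A) : β B (l ≫ S.map a) = β A (a ≫ l)

theorem exists_isSerreFunctor
    (h : ∀ A : 𝒞, ∃ (S : 𝒞) (β : Module.Dual 𝕜 (A ⟶ S)), IsSerreTrace β) :
    ∃ (S : 𝒞 ⥤ 𝒞) (β : ∀ A, Module.Dual 𝕜 (A ⟶ S.obj A)), IsSerreFunctor S β := by
  choose S β hβ using h
  have exists_map {A B : 𝒞} (a : A ⟶ B) :
      ∃ s : S A ⟶ S B, ∀ l : B ⟶ S A, β B (l ≫ s) = β A (a ≫ l) :=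
    (hβ B).exists_hom_to (β A ∘ₗ Linear.leftComp 𝕜 (S A) a)
  choose s hs using @exists_map
  let F : 𝒞 ⥤ 𝒞 :=
    { obj := S
      map := s
      map_id := fun A => (hβ A).hom_ext_to fun l => by rw [hs, Category.id_comp, Category.comp_id]
      map_comp := fun {_ _ D} a b => (hβ D).hom_ext_to fun l => by
        rw [hs, ← Category.assoc l, hs, ← Category.assoc b, hs, Category.assoc] }
  exact ⟨F, β, hβ, hs⟩

namespace IsSerreFunctor

variable {S : 𝒞 ⥤ 𝒞} {β : ∀ A, Module.Dual 𝕜 (A ⟶ S.obj A)}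

protected lemma map_add (hS : IsSerreFunctor S β) {A B : 𝒞} (f g : A ⟶ B) :
    S.map (f + g) = S.map f + S.map g :=
  (hS.isSerreTrace B).hom_ext_to fun l => by
    simp only [Preadditive.comp_add, Preadditive.add_comp, map_add, hS.apply_comp_map]

protected lemma map_smul (hS : IsSerreFunctor S β) {A B : 𝒞} (r : 𝕜) (f : A ⟶ B) :
    S.map (r • f) = r • S.map f :=
  (hS.isSerreTrace B).hom_ext_to fun l => by
    simp only [Linear.comp_smul, Linear.smul_comp, map_smul, hS.apply_comp_map]

lemma faithful (hS : IsSerreFunctor S β) : S.Faithful where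
  map_injective {A _ a b} h := (hS.isSerreTrace A).hom_ext_from fun l => by
    rw [← hS.apply_comp_map a, ← hS.apply_comp_map b, h]

lemma full (hS : IsSerreFunctor S β) : S.Full where
  map_surjective {A B} s := by
    obtain ⟨a, ha⟩ := (hS.isSerreTrace A).exists_hom_from (β B ∘ₗ Linear.rightComp 𝕜 B s)
    exact ⟨a, (hS.isSerreTrace B).hom_ext_to fun l => (hS.apply_comp_map a l).trans (ha l)⟩

lemma isEquivalence (hS : IsSerreFunctor S β)
    (h : ∀ X : 𝒞, ∃ (A : 𝒞) (γ : Module.Dual 𝕜 (A ⟶ X)), IsSerreTrace γ) :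
    S.IsEquivalence where
  faithful := hS.faithful
  full := hS.full
  essSurj := ⟨fun X => by
    obtain ⟨A, γ, hγ⟩ := h X
    exact ⟨A, (hS.isSerreTrace A).nonempty_iso hγ⟩⟩

lemma tracePairing_comp_map (hS : IsSerreFunctor S β) {A' A B : 𝒞} (a : A' ⟶ A) (f : A ⟶ B)
    (φ : B ⟶ S.obj A') :
    tracePairing (β A') B (a ≫ f) φ = tracePairing (β A) B f (φ ≫ S.map a) := by
  calc β A' ((a ≫ f) ≫ φ) = β A' (a ≫ f ≫ φ) := by rw [Category.assoc]
    _ = β A ((f ≫ φ) ≫ S.map a) := (hS.apply_comp_map a _).symm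
    _ = β A (f ≫ φ ≫ S.map a) := by rw [Category.assoc]

end IsSerreFunctor

end SerreFunctor

/-- **Theorem 6.5 (= Theorem 1.5).** Let `C` be a Krull–Schmidt, Hom-finite, `k`-linear
triangulated category. If `C` has a cluster tilting object, then `C` has a Serre
functor: a `k`-linear autoequivalence `S : C ⥤ C` together with `k`-linear isomorphisms
`Hom(A, B) ≃ Hom(B, S A)*`, natural in both `A` and `B`. -/
theorem heart_stmt_13 [∀ X Y : C, FiniteDimensional k (X ⟶ Y)]
    (hKS : KrullSchmidt C) (T : C) (hT : ClusterTilting C T) :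
    ∃ S : C ⥤ C, S.IsEquivalence ∧
      (∀ {A B : C} (f g : A ⟶ B), S.map (f + g) = S.map f + S.map g) ∧
      (∀ {A B : C} (r : k) (f : A ⟶ B), S.map (r • f) = r • S.map f) ∧
      ∃ η : ∀ A B : C, (A ⟶ B) ≃ₗ[k] Module.Dual k (B ⟶ S.obj A),
        (∀ (A B B' : C) (f : A ⟶ B) (g : B ⟶ B') (φ : B' ⟶ S.obj A),
          η A B' (f ≫ g) φ = η A B f (g ≫ φ)) ∧
        (∀ (A' A B : C) (a : A' ⟶ A) (f : A ⟶ B) (φ : B ⟶ S.obj A'),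
          η A' B (a ≫ f) φ = η A B f (φ ≫ S.map a)) := by
  have := hKS.isIdempotentComplete
  obtain ⟨S, β, hS⟩ := exists_isSerreFunctor (𝕜 := k) hT.exists_isSerreTrace_from
  exact ⟨S, hS.isEquivalence hT.exists_isSerreTrace_to, hS.map_add, hS.map_smul,
    fun A B => .ofBijective (tracePairing (β A) B) (hS.isSerreTrace A B).bijective_left,
    fun _ _ _ => tracePairing_comp (β _), fun _ _ _ => hS.tracePairing_comp_map⟩
end
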